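/- Let N ≥ 1 and p > 1, and let u_0 ∈ L^1(ℝ^N). Suppose v : ℝ^N × (0, ∞) → ℝ satisfies: (a) for each t > 0, x ↦ v(x, t) is differentiable; (b) for every t > 0 and almost every x ∈ ℝ^N, v(x, t) = (P_t * u_0)(x) + ∫_0^t (P_{t−τ} * |∇v(·, τ)|^p)(x) dτ; (c) for every q ∈ [1, ∞] and j ∈ {0, 1}, sup_{t > 0} (1+t)^{N(1 − 1/q) + j} ‖∇^j v(·, t)‖_{L^q(ℝ^N)} < ∞ (where ∇^0 v = v and ∇^1 v = ∇v). Then: (1) the integral ∫_0^∞ ∫_{ℝ^N} ‖∇_x v(x, τ)‖^p dx dτ is finite, so the constant C_* := ∫_{ℝ^N} u_0(x) dx + ∫_0^∞ ∫_{ℝ^N} ‖∇_x v(x, τ)‖^p dx dτ is well defined; and (2) there exists C > 0 such that for all t ≥ 1: | ∫_{ℝ^N} v(x, t) dx − C_* | ≤ C t^{−(N+1)(p−1)}. -/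

import Mathlib

open MeasureTheory Real Filter ENNReal

/-- The normalizing constant of the Poisson kernel on `ℝ^N`. -/
noncomputable def cN (N : ℕ) : ℝ :=
  Real.Gamma (((N : ℝ) + 1) / 2) / Real.pi ^ (((N : ℝ) + 1) / 2)

/-- The Poisson kernel `P(x) = c_N (1 + ‖x‖²)^{-(N+1)/2}` on `ℝ^N`. -/
noncomputable def P (N : ℕ) (x : EuclideanSpace ℝ (Fin N)) : ℝ :=
  cN N * (1 + ‖x‖ ^ 2) ^ (-(((N : ℝ) + 1) / 2))

/-- The dilated Poisson kernel `P_t(x) = t^{-N} P(x/t)`. -/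
noncomputable def Pt (N : ℕ) (t : ℝ) (x : EuclideanSpace ℝ (Fin N)) : ℝ :=
  t ^ (-(N : ℝ)) * P N (t⁻¹ • x)

/-!
Convolution with `P_s` preserves total mass, so integrating the Duhamel formula gives
`∫ v(t) = ∫ u₀ + ∫_0^t ‖∇v(τ)‖_p^p dτ`. The decay bound at `q = p` says
`‖∇v(τ)‖_p^p ≤ K (1 + τ)^{-(N+1)(p-1)-1}`, hence the total source is finite and the error, which is
the tail `∫_t^∞ ‖∇v(τ)‖_p^p dτ`, is at most a multiple of `t^{-(N+1)(p-1)}`.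

Fubini in the first step needs measurability in `τ`, which is not assumed: the Bochner time integral
is `0` whenever its integrand is not measurable. For fixed `t`, continuity in `x`, connectedness of
`ℝ^N` and positivity of `P_s` show that either `τ ↦ (P_{t-τ} * |∇v(τ)|^p)(x)` is measurable on
`(0, t)` for every `x`, or `v(t) = P_t * u₀`. Since the Fourier transform of `P_s` has no zeros,
measurability of these convolutions is equivalent to measurability of `τ ↦ 𝓕(|∇v(τ)|^p)(ξ)` for
every `ξ`, a condition that does not involve `t`. So it holds on `(0, t)` for `t` of the first kind,
while at times of the second kind the source agrees with that of the free solution `P_τ * u₀`; the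
two cases glue to measurability on `(0, ∞)`.

That Fourier transform is obtained by writing the Poisson kernel as a mixture of Gaussians.
-/

open scoped FourierTransform Topology

section FourierMeasurability

variable {Ω V : Type*} [MeasurableSpace Ω] {μ : Measure Ω} [NormedAddCommGroup V]
  [InnerProductSpace ℝ V] [FiniteDimensional ℝ V] [MeasurableSpace V] [BorelSpace V]

lemma aestronglyMeasurable_fourierChar_smul {f : Ω × V → ℂ}
    (hf : AEStronglyMeasurable f (μ.prod volume)) (ξ : V) :
    AEStronglyMeasurable (fun q => 𝐞 (-inner ℝ q.2 ξ) • f q) (μ.prod volume) := by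
  have hchar : Continuous fun x : V => 𝐞 (-inner ℝ x ξ) := by
    have := continuous_fourierChar
    fun_prop
  exact (hchar.aestronglyMeasurable (μ := (volume : Measure V))).comp_snd.smul hf

lemma aestronglyMeasurable_fourier {f : Ω → V → ℂ}
    (hf : AEStronglyMeasurable (Function.uncurry f) (μ.prod volume)) (ξ : V) :
    AEStronglyMeasurable (fun ω => 𝓕 (f ω) ξ) μ := by
  simp only [Real.fourier_eq]
  exact (aestronglyMeasurable_fourierChar_smul hf ξ).integral_prod_right'

lemma continuous_fourier {g : V → ℂ} (hg : Integrable g) : Continuous (𝓕 g) :=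
  VectorFourier.fourierIntegral_continuous continuous_fourierChar continuous_inner hg

lemma aestronglyMeasurable_uncurry_of_ae_continuous {X E : Type*} [TopologicalSpace X]
    [TopologicalSpace.MetrizableSpace X] [SecondCountableTopology X] [MeasurableSpace X]
    [OpensMeasurableSpace X] [TopologicalSpace E]
    [TopologicalSpace.PseudoMetrizableSpace E] [Zero E] {f : Ω → X → E} {ν : Measure X}
    (hcont : ∀ᵐ ω ∂μ, Continuous (f ω)) (hmeas : ∀ x, AEStronglyMeasurable (f · x) μ) :
    AEStronglyMeasurable (Function.uncurry f) (μ.prod ν) := by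
  obtain ⟨D, hDcount, hDdense⟩ := TopologicalSpace.exists_countable_dense X
  have hgood : ∀ᵐ ω ∂μ, Continuous (f ω) ∧ ∀ x (_ : x ∈ D), f ω x = (hmeas x).mk _ ω :=
    hcont.and ((ae_ball_iff hDcount).2 fun x _ => (hmeas x).ae_eq_mk)
  obtain ⟨S, hS, hSmeas, hSnull⟩ := exists_measurable_superset_of_null (ae_iff.1 hgood)
  replace hS : ∀ ω ∉ S, Continuous (f ω) ∧ ∀ x ∈ D, f ω x = (hmeas x).mk _ ω := fun ω hω =>
    not_not.1 fun h => hω (hS h)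
  classical
  let f' : X → Ω → E := fun x => Sᶜ.indicator (f · x)
  have hf'cont (ω : Ω) : Continuous fun x => f' x ω := by
    by_cases hω : ω ∈ S
    · simpa [f', hω] using continuous_const
    · simpa [f', hω] using (hS ω hω).1
  have hf'meas_dense (x : X) (hx : x ∈ D) : StronglyMeasurable (f' x) := by
    have heq : f' x = Sᶜ.indicator ((hmeas x).mk _) :=
      Set.indicator_congr fun ω hω => (hS ω hω).2 x hx
    exact heq ▸ (hmeas x).stronglyMeasurable_mk.indicator hSmeas.compl
  have hf'meas (x : X) : StronglyMeasurable (f' x) := by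
    obtain ⟨u, hu, hux⟩ := mem_closure_iff_seq_limit.1 (hDdense x)
    exact stronglyMeasurable_of_tendsto atTop (fun n => hf'meas_dense (u n) (hu n))
      (tendsto_pi_nhds.2 fun ω => ((hf'cont ω).tendsto x).comp hux)
  have hjoint := (stronglyMeasurable_uncurry_of_continuous_of_stronglyMeasurable hf'cont
    hf'meas).comp_measurable (measurable_swap (α := Ω) (β := X))
  refine ⟨_, hjoint, ?_⟩
  have hnotS : ∀ᵐ ω ∂μ, ω ∉ S := measure_eq_zero_iff_ae_notMem.1 hSnull
  filter_upwards [Measure.quasiMeasurePreserving_fst.ae hnotS] with q hq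
  simp [Function.uncurry, f', hq]

end FourierMeasurability

section GaussianMixture

variable {Ω V : Type*} [MeasurableSpace Ω] {μ : Measure Ω} {w b : Ω → ℝ}
  [NormedAddCommGroup V] [InnerProductSpace ℝ V] [FiniteDimensional ℝ V] [MeasurableSpace V]
  [BorelSpace V]

/-- The radial profile `r ↦ ∫ w(ω) exp(-b(ω) r²) dμ(ω)` of a superposition of Gaussians; as a
function on an inner product space it is evaluated at `r = ‖x‖`. -/
noncomputable def gaussianMixture (μ : Measure Ω) (w b : Ω → ℝ) (r : ℝ) : ℝ :=
  ∫ ω, w ω * exp (-b ω * r ^ 2) ∂μ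

lemma gaussianMixture_mul (c r : ℝ) :
    gaussianMixture μ w b (c * r) = gaussianMixture μ w (fun ω => c ^ 2 * b ω) r := by
  simp only [gaussianMixture]
  congr with ω
  ring_nf

lemma measurable_gaussianMixture [SFinite μ] (hw : Measurable w) (hb : Measurable b) :
    Measurable (gaussianMixture μ w b) := by
  have hmeas : Measurable fun q : ℝ × Ω => w q.2 * exp (-b q.2 * q.1 ^ 2) := by fun_prop
  exact hmeas.stronglyMeasurable.integral_prod_right'.measurable

lemma integrable_gaussianMixture_integrand (hb : AEMeasurable b μ) (hbpos : ∀ᵐ ω ∂μ, 0 < b ω)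
    (hint : Integrable w μ) (r : ℝ) :
    Integrable (fun ω => w ω * exp (-b ω * r ^ 2)) μ := by
  refine hint.mul_bdd (c := 1) ?_ ?_
  · exact AEMeasurable.aestronglyMeasurable (by fun_prop)
  · filter_upwards [hbpos] with ω hω
    rw [norm_of_nonneg (exp_pos _).le, exp_le_one_iff, neg_mul, neg_nonpos]
    positivity

lemma gaussianMixture_pos [NeZero μ] (hb : AEMeasurable b μ) (hbpos : ∀ᵐ ω ∂μ, 0 < b ω)
    (hwpos : ∀ᵐ ω ∂μ, 0 < w ω) (hint : Integrable w μ) (r : ℝ) :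
    0 < gaussianMixture μ w b r := by
  have hpos : ∀ᵐ ω ∂μ, 0 < w ω * exp (-b ω * r ^ 2) := by
    filter_upwards [hwpos] with ω hω using mul_pos hω (exp_pos _)
  refine (integral_nonneg_of_ae (hpos.mono fun ω hω => hω.le)).lt_of_ne' fun hzero => ?_
  have hae := (integral_eq_zero_iff_of_nonneg_ae (hpos.mono fun ω hω => hω.le)
    (integrable_gaussianMixture_integrand hb hbpos hint r)).1 hzero
  obtain ⟨ω, hω, hω'⟩ := (hpos.and hae).exists
  exact hω.ne' hω'

lemma integrable_exp_neg_mul_sq_norm {a : ℝ} (ha : 0 < a) :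
    Integrable fun x : V => exp (-a * ‖x‖ ^ 2) := by
  refine Integrable.of_integral_ne_zero ?_
  rw [GaussianFourier.integral_rexp_neg_mul_sq_norm ha]
  positivity

lemma integrable_prod_gaussianMixture (hw : AEMeasurable w μ) (hb : AEMeasurable b μ)
    (hbpos : ∀ᵐ ω ∂μ, 0 < b ω)
    (hint : Integrable (fun ω => w ω * (π / b ω) ^ ((Module.finrank ℝ V : ℝ) / 2)) μ) :
    Integrable (fun q : Ω × V => w q.1 * exp (-b q.1 * ‖q.2‖ ^ 2)) (μ.prod volume) := by
  have hmeas : AEStronglyMeasurable (fun q : Ω × V => w q.1 * exp (-b q.1 * ‖q.2‖ ^ 2))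
      (μ.prod volume) := by
    have := hw.comp_fst (ν := (volume : Measure V))
    have := hb.comp_fst (ν := (volume : Measure V))
    exact AEMeasurable.aestronglyMeasurable (by fun_prop)
  refine (integrable_prod_iff hmeas).2 ⟨?_, hint.norm.congr ?_⟩
  · filter_upwards [hbpos] with ω hω
    exact (integrable_exp_neg_mul_sq_norm hω).const_mul (w ω)
  · filter_upwards [hbpos] with ω hω
    have hnonneg : 0 ≤ (π / b ω) ^ ((Module.finrank ℝ V : ℝ) / 2) := by positivity
    simp only [norm_mul, norm_of_nonneg (exp_pos _).le, norm_of_nonneg hnonneg]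
    rw [integral_const_mul, GaussianFourier.integral_rexp_neg_mul_sq_norm hω]

variable [SFinite μ]

lemma integrable_gaussianMixture_norm (hw : AEMeasurable w μ) (hb : AEMeasurable b μ)
    (hbpos : ∀ᵐ ω ∂μ, 0 < b ω)
    (hint : Integrable (fun ω => w ω * (π / b ω) ^ ((Module.finrank ℝ V : ℝ) / 2)) μ) :
    Integrable fun x : V => gaussianMixture μ w b ‖x‖ :=
  (integrable_prod_gaussianMixture hw hb hbpos hint).integral_prod_right

lemma fourier_gaussianMixture_norm (hw : AEMeasurable w μ) (hb : AEMeasurable b μ)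
    (hbpos : ∀ᵐ ω ∂μ, 0 < b ω)
    (hint : Integrable (fun ω => w ω * (π / b ω) ^ ((Module.finrank ℝ V : ℝ) / 2)) μ) (ξ : V) :
    𝓕 (fun x : V => (gaussianMixture μ w b ‖x‖ : ℂ)) ξ =
      gaussianMixture μ (fun ω => w ω * (π / b ω) ^ ((Module.finrank ℝ V : ℝ) / 2))
        (fun ω => π ^ 2 / b ω) ‖ξ‖ := by
  let F : Ω → V → ℂ := fun ω x => 𝐞 (-inner ℝ x ξ) • ((w ω * exp (-b ω * ‖x‖ ^ 2) : ℝ) : ℂ)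
  have hF : Integrable (Function.uncurry F) (μ.prod volume) := by
    have hreal := (integrable_prod_gaussianMixture hw hb hbpos hint).ofReal (𝕜 := ℂ)
    exact hreal.mono (aestronglyMeasurable_fourierChar_smul hreal.1 ξ)
      (.of_forall fun q => (Circle.norm_smul _ _).le)
  calc 𝓕 (fun x : V => (gaussianMixture μ w b ‖x‖ : ℂ)) ξ
      = ∫ x, ∫ ω, F ω x ∂μ := by
        rw [Real.fourier_eq]
        congr with x
        simp only [F, gaussianMixture, Circle.smul_def, integral_smul, integral_complex_ofReal]
    _ = ∫ ω, w ω * 𝓕 (fun x : V => Complex.exp (-(b ω : ℂ) * ‖x‖ ^ 2)) ξ ∂μ := by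
        rw [← integral_integral_swap hF]
        congr with ω
        rw [Real.fourier_eq, ← integral_const_mul]
        congr with x
        simp only [F, mul_smul_comm]
        push_cast
        rfl
    _ = _ := by
        rw [gaussianMixture, ← integral_complex_ofReal]
        refine integral_congr_ae ?_
        filter_upwards [hbpos] with ω hω
        rw [fourier_gaussian_innerProductSpace (by simpa using hω)]
        push_cast [Complex.ofReal_cpow (by positivity : 0 ≤ π / b ω)]
        rw [mul_assoc, neg_mul, neg_mul, neg_div, mul_div_right_comm]

end GaussianMixture

section PoissonKernel

/-- The integrand `l ↦ l^(a-1) e^(-l)` of Euler's integral for `Γ(a)`: up to constants, the weight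
writing the Poisson kernel and its Fourier transform as superpositions of Gaussians. -/
noncomputable def gammaWeight (a l : ℝ) : ℝ :=
  l ^ (a - 1) * exp (-l)

lemma measurable_gammaWeight (a : ℝ) : Measurable (gammaWeight a) := by
  unfold gammaWeight
  fun_prop

lemma gammaWeight_pos (a : ℝ) {l : ℝ} (hl : 0 < l) : 0 < gammaWeight a l :=
  mul_pos (rpow_pos_of_pos hl _) (exp_pos _)

lemma integrableOn_gammaWeight {a : ℝ} (ha : 0 < a) :
    IntegrableOn (gammaWeight a) (Set.Ioi 0) :=
  (Real.GammaIntegral_convergent ha).congr_fun (fun _ _ => mul_comm _ _) measurableSet_Ioi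

lemma gammaWeight_mul_rpow (a ν : ℝ) {l : ℝ} (hl : 0 < l) :
    gammaWeight a l * l ^ ν = gammaWeight (a + ν) l := by
  rw [gammaWeight, gammaWeight, mul_right_comm, ← rpow_add hl, sub_add_eq_add_sub]

lemma gaussianMixture_gammaWeight {a : ℝ} (ha : 0 < a) (c r : ℝ) :
    gaussianMixture (volume.restrict (Set.Ioi 0)) (fun l => c * gammaWeight a l) (fun l => l) r =
      c * Gamma a * (1 + r ^ 2) ^ (-a) := by
  have hexp (l : ℝ) : c * gammaWeight a l * exp (-l * r ^ 2) =
      c * (l ^ (a - 1) * exp (-((1 + r ^ 2) * l))) := by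
    rw [gammaWeight, mul_assoc, mul_assoc, ← exp_add]
    ring_nf
  simp only [gaussianMixture, hexp]
  rw [integral_const_mul, integral_rpow_mul_exp_neg_mul_Ioi ha (by positivity),
    one_div, inv_rpow (by positivity), rpow_neg (by positivity)]
  ring

/-- The Fourier transform of `Pt N s` is `ξ ↦ poissonSymbol (s * ‖ξ‖)`. The closed form of
`poissonSymbol r` is `exp (-2 * π * r)`; only its positivity and integrability matter here, and they
are immediate from this subordination formula. -/
noncomputable def poissonSymbol (r : ℝ) : ℝ :=
  gaussianMixture (volume.restrict (Set.Ioi 0)) (fun l => (√π)⁻¹ * gammaWeight (1 / 2) l)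
    (fun l => π ^ 2 / l) r

lemma ae_restrict_Ioi_pos : ∀ᵐ l ∂(volume.restrict (Set.Ioi (0 : ℝ))), 0 < l :=
  ae_restrict_mem measurableSet_Ioi

lemma measurable_poissonSymbol : Measurable poissonSymbol :=
  measurable_gaussianMixture ((measurable_gammaWeight _).const_mul _) (by fun_prop)

lemma poissonSymbol_pos (r : ℝ) : 0 < poissonSymbol r := by
  have : NeZero (volume.restrict (Set.Ioi (0 : ℝ))) := ⟨by simp⟩
  refine gaussianMixture_pos (by fun_prop) ?_ ?_
    ((integrableOn_gammaWeight (by norm_num)).const_mul _) r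
  · filter_upwards [ae_restrict_Ioi_pos] with l hl using by positivity
  · filter_upwards [ae_restrict_Ioi_pos] with l hl using
      mul_pos (by positivity) (gammaWeight_pos _ hl)

lemma poissonSymbol_zero : poissonSymbol 0 = 1 := by
  have h := gaussianMixture_gammaWeight (a := 1 / 2) (by norm_num) (√π)⁻¹ 0
  rw [Gamma_one_half_eq, inv_mul_cancel₀ (by positivity)] at h
  simpa [poissonSymbol, gaussianMixture] using h

variable {N : ℕ}

local notation "𝔼" => EuclideanSpace ℝ (Fin N)

lemma integrable_poissonSymbol_mul_norm {s : ℝ} (hs : 0 < s) :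
    Integrable fun ξ : 𝔼 => poissonSymbol (s * ‖ξ‖) := by
  simp only [poissonSymbol, gaussianMixture_mul]
  refine integrable_gaussianMixture_norm (((measurable_gammaWeight _).const_mul _).aemeasurable)
    (by fun_prop) ?_ ?_
  · filter_upwards [ae_restrict_Ioi_pos] with l hl using by positivity
  · rw [finrank_euclideanSpace_fin]
    have hweight := (integrableOn_gammaWeight (a := 1 / 2 + N / 2) (by positivity)).const_mul
      ((√π)⁻¹ * ((s ^ 2 * π)⁻¹) ^ ((N : ℝ) / 2))
    refine hweight.congr ?_
    filter_upwards [ae_restrict_Ioi_pos] with l hl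
    have hratio : π / (s ^ 2 * (π ^ 2 / l)) = (s ^ 2 * π)⁻¹ * l := by field_simp
    rw [hratio, mul_rpow (by positivity) hl.le, ← gammaWeight_mul_rpow _ _ hl]
    ring

/-- The weight of the Gaussian `exp (-(l / s²) * ‖x‖²)` in the Poisson kernel `Pt N s` of `ℝ^N`. -/
noncomputable def poissonWeight (N : ℕ) (s l : ℝ) : ℝ :=
  s ^ (-(N : ℝ)) * (π ^ (((N : ℝ) + 1) / 2))⁻¹ * gammaWeight (((N : ℝ) + 1) / 2) l

lemma measurable_poissonWeight (s : ℝ) : Measurable (poissonWeight N s) :=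
  (measurable_gammaWeight _).const_mul _

lemma Pt_eq_gaussianMixture {s : ℝ} (hs : 0 < s) (x : 𝔼) :
    Pt N s x = gaussianMixture (volume.restrict (Set.Ioi 0)) (poissonWeight N s)
      (fun l => (s⁻¹) ^ 2 * l) ‖x‖ := by
  unfold poissonWeight
  rw [← gaussianMixture_mul, gaussianMixture_gammaWeight (by positivity), Pt, P, cN, norm_smul,
    norm_of_nonneg (by positivity)]
  ring

lemma poissonWeight_mul_rpow {s l : ℝ} (hs : 0 < s) (hl : 0 < l) :
    poissonWeight N s l * (π / ((s⁻¹) ^ 2 * l)) ^ ((Module.finrank ℝ 𝔼 : ℝ) / 2) =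
      (√π)⁻¹ * gammaWeight (1 / 2) l := by
  have hratio : π / ((s⁻¹) ^ 2 * l) = s ^ 2 * π / l := by field_simp
  have hpi : π ^ (((N : ℝ) + 1) / 2) = π ^ ((N : ℝ) / 2) * √π := by
    rw [sqrt_eq_rpow, ← rpow_add pi_pos]
    ring_nf
  have hs2 : (s ^ 2) ^ ((N : ℝ) / 2) = s ^ (N : ℝ) := by
    rw [← rpow_natCast_mul hs.le]
    ring_nf
  have hgamma : gammaWeight (((N : ℝ) + 1) / 2) l =
      gammaWeight (1 / 2) l * l ^ ((N : ℝ) / 2) := by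
    rw [gammaWeight_mul_rpow _ _ hl]
    ring_nf
  rw [poissonWeight, finrank_euclideanSpace_fin, hratio, hpi, hgamma,
    div_rpow (by positivity) hl.le, mul_rpow (by positivity) pi_pos.le, hs2, rpow_neg hs.le]
  field_simp

lemma integrable_poissonWeight_mul_rpow {s : ℝ} (hs : 0 < s) :
    Integrable (fun l => poissonWeight N s l *
      (π / ((s⁻¹) ^ 2 * l)) ^ ((Module.finrank ℝ 𝔼 : ℝ) / 2)) (volume.restrict (Set.Ioi 0)) := by
  have hweight := (integrableOn_gammaWeight (a := 1 / 2) (by norm_num)).const_mul (√π)⁻¹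
  refine hweight.congr ?_
  filter_upwards [ae_restrict_Ioi_pos] with l hl using (poissonWeight_mul_rpow hs hl).symm

lemma integrable_Pt {s : ℝ} (hs : 0 < s) : Integrable (Pt N s) := by
  rw [funext (Pt_eq_gaussianMixture hs)]
  refine integrable_gaussianMixture_norm (measurable_poissonWeight s).aemeasurable
    (by fun_prop) ?_ (integrable_poissonWeight_mul_rpow hs)
  filter_upwards [ae_restrict_Ioi_pos] with l hl using by positivity

lemma fourier_Pt {s : ℝ} (hs : 0 < s) (ξ : 𝔼) :
    𝓕 (fun x : 𝔼 => (Pt N s x : ℂ)) ξ = poissonSymbol (s * ‖ξ‖) := by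
  simp only [Pt_eq_gaussianMixture hs]
  rw [fourier_gaussianMixture_norm (measurable_poissonWeight s).aemeasurable
    (by fun_prop) ?_ (integrable_poissonWeight_mul_rpow hs), poissonSymbol, gaussianMixture_mul]
  · congr 1
    refine integral_congr_ae ?_
    filter_upwards [ae_restrict_Ioi_pos] with l hl
    rw [poissonWeight_mul_rpow hs hl]
    congr 3
    field_simp
  · filter_upwards [ae_restrict_Ioi_pos] with l hl using by positivity

lemma cN_pos (N : ℕ) : 0 < cN N :=
  div_pos (Gamma_pos_of_pos (by positivity)) (by positivity)

lemma Pt_pos {s : ℝ} (hs : 0 < s) (x : 𝔼) : 0 < Pt N s x := by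
  have := cN_pos N
  unfold Pt P
  positivity

lemma Pt_le {s : ℝ} (hs : 0 < s) (x : 𝔼) : Pt N s x ≤ s ^ (-(N : ℝ)) * cN N := by
  have hP : (1 + ‖s⁻¹ • x‖ ^ 2) ^ (-(((N : ℝ) + 1) / 2)) ≤ 1 :=
    rpow_le_one_of_one_le_of_nonpos (by simp) (by simpa using by positivity)
  exact mul_le_mul_of_nonneg_left (mul_le_of_le_one_right (cN_pos N).le hP) (by positivity)

lemma continuousAt_uncurry_Pt {s : ℝ} (hs : 0 < s) (x : 𝔼) :
    ContinuousAt (Function.uncurry (Pt N)) (s, x) := by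
  unfold Function.uncurry Pt P
  have hinv : ContinuousAt (fun q : ℝ × 𝔼 => q.1⁻¹) (s, x) := continuousAt_fst.inv₀ hs.ne'
  refine (continuousAt_fst.rpow_const (.inl hs.ne')).mul (continuousAt_const.mul ?_)
  exact ContinuousAt.rpow_const (by fun_prop) (.inl (by positivity))

lemma integral_Pt {s : ℝ} (hs : 0 < s) : ∫ x, Pt N s x = 1 := by
  have h := fourier_Pt (N := N) hs 0
  rw [Real.fourier_eq, norm_zero, mul_zero, poissonSymbol_zero] at h
  simp only [inner_zero_right, neg_zero, AddChar.map_zero_eq_one, one_smul] at h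
  rw [integral_complex_ofReal] at h
  exact_mod_cast h

end PoissonKernel

section PoissonConv

variable {N : ℕ}

local notation "𝔼" => EuclideanSpace ℝ (Fin N)

/-- The Poisson extension `P_s * g` of `g`, evaluated at height `s`. -/
noncomputable def poissonConv (s : ℝ) (g : 𝔼 → ℝ) (x : 𝔼) : ℝ :=
  ∫ y, Pt N s (x - y) * g y

lemma poissonConv_eq_convolution (s : ℝ) (g : 𝔼 → ℝ) :
    poissonConv s g = convolution (Pt N s) g (ContinuousLinearMap.mul ℝ ℝ) volume := by
  ext x
  rw [convolution_mul_swap, poissonConv]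

variable {s : ℝ} {g : EuclideanSpace ℝ (Fin N) → ℝ}

lemma continuous_Pt (hs : 0 < s) : Continuous (Pt N s) :=
  continuous_iff_continuousAt.2 fun x =>
    (continuousAt_uncurry_Pt hs x).comp (Continuous.prodMk_right s).continuousAt

lemma integrable_Pt_sub_mul (hs : 0 < s) (hg : Integrable g) (x : 𝔼) :
    Integrable fun y => Pt N s (x - y) * g y := by
  have hcont : Continuous fun y => Pt N s (x - y) := (continuous_Pt hs).comp (by fun_prop)
  refine hg.bdd_mul (c := s ^ (-(N : ℝ)) * cN N) hcont.aestronglyMeasurable (.of_forall fun y => ?_)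
  exact (norm_of_nonneg (Pt_pos hs _).le).trans_le (Pt_le hs _)

lemma integrable_poissonConv (hs : 0 < s) (hg : Integrable g) : Integrable (poissonConv s g) := by
  rw [poissonConv_eq_convolution]
  exact (integrable_Pt hs).integrable_convolution _ hg

lemma integral_poissonConv (hs : 0 < s) (hg : Integrable g) :
    ∫ x, poissonConv s g x = ∫ x, g x := by
  rw [poissonConv_eq_convolution, integral_convolution _ (integrable_Pt hs) hg, integral_Pt hs,
    ContinuousLinearMap.mul_apply', one_mul]

lemma ae_nonneg_Pt_sub_mul (hs : 0 < s) (hg : 0 ≤ᵐ[volume] g) (x : 𝔼) :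
    0 ≤ᵐ[volume] fun y => Pt N s (x - y) * g y := by
  filter_upwards [hg] with y hy using mul_nonneg (Pt_pos hs _).le hy

lemma poissonConv_nonneg (hs : 0 < s) (hg : 0 ≤ᵐ[volume] g) (x : 𝔼) : 0 ≤ poissonConv s g x :=
  integral_nonneg_of_ae (ae_nonneg_Pt_sub_mul hs hg x)

lemma poissonConv_le (hs : 0 < s) (hg : Integrable g) {M : ℝ} (hM : ∀ᵐ x, g x ≤ M) (x : 𝔼) :
    poissonConv s g x ≤ M := calc
  poissonConv s g x ≤ ∫ y, Pt N s (x - y) * M := by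
    refine integral_mono_ae (integrable_Pt_sub_mul hs hg x)
      (((integrable_Pt hs).comp_sub_left x).mul_const M) ?_
    filter_upwards [hM] with y hy using mul_le_mul_of_nonneg_left hy (Pt_pos hs _).le
  _ = M := by
    rw [integral_mul_const, integral_sub_left_eq_self (Pt N s) volume x, integral_Pt hs, one_mul]

lemma poissonConv_eq_zero_of_eq_zero (hs : 0 < s) (hg : Integrable g) (hg0 : 0 ≤ᵐ[volume] g)
    {x : 𝔼} (hx : poissonConv s g x = 0) (x' : 𝔼) : poissonConv s g x' = 0 := by
  have hzero := (integral_eq_zero_iff_of_nonneg_ae (ae_nonneg_Pt_sub_mul hs hg0 x)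
    (integrable_Pt_sub_mul hs hg x)).1 hx
  refine integral_eq_zero_of_ae ?_
  filter_upwards [hzero] with y hy
  rw [(mul_eq_zero.1 hy).resolve_left (Pt_pos hs _).ne', mul_zero, Pi.zero_apply]

lemma continuousAt_uncurry_poissonConv (hs : 0 < s) (hg : Integrable g) (x : 𝔼) :
    ContinuousAt (Function.uncurry fun s x => poissonConv s g x) (s, x) := by
  have hlarge : ∀ᶠ q : ℝ × 𝔼 in 𝓝 (s, x), s / 2 < q.1 :=
    continuousAt_fst.eventually (lt_mem_nhds (half_lt_self hs))
  refine continuousAt_of_dominated (bound := fun y => (s / 2) ^ (-(N : ℝ)) * cN N * ‖g y‖)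
    ?_ ?_ (hg.norm.const_mul _) (.of_forall fun y => ?_)
  · filter_upwards [hlarge] with q hq
    exact (integrable_Pt_sub_mul ((half_pos hs).trans hq) hg q.2).1
  · filter_upwards [hlarge] with q hq
    have hpos := (half_pos hs).trans hq
    refine .of_forall fun y => ?_
    rw [norm_mul, norm_of_nonneg (Pt_pos hpos _).le]
    gcongr
    refine (Pt_le hpos _).trans (mul_le_mul_of_nonneg_right ?_ (cN_pos N).le)
    exact rpow_le_rpow_of_nonpos (half_pos hs) hq.le (by simp)
  · have hsub : ContinuousAt (fun q : ℝ × 𝔼 => (q.1, q.2 - y)) (s, x) := by fun_prop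
    exact ((continuousAt_uncurry_Pt hs (x - y)).comp_of_eq hsub rfl).mul continuousAt_const

lemma continuous_poissonConv (hs : 0 < s) (hg : Integrable g) : Continuous (poissonConv s g) :=
  continuous_iff_continuousAt.2 fun x =>
    (continuousAt_uncurry_poissonConv hs hg x).comp (Continuous.prodMk_right s).continuousAt

lemma fourier_poissonConv (hs : 0 < s) (hg : Integrable g) (ξ : 𝔼) :
    𝓕 (fun x => (poissonConv s g x : ℂ)) ξ =
      poissonSymbol (s * ‖ξ‖) * 𝓕 (fun x => (g x : ℂ)) ξ := by
  have hconv : (fun x => (poissonConv s g x : ℂ)) = convolution (fun x : 𝔼 => (Pt N s x : ℂ))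
      (fun x : 𝔼 => (g x : ℂ)) (ContinuousLinearMap.mul ℂ ℂ) volume := by
    ext x
    rw [convolution_mul_swap, poissonConv, ← integral_complex_ofReal]
    simp only [Complex.ofReal_mul]
  rw [hconv, ← fourier_Pt hs]
  exact Real.fourier_mul_convolution_eq (integrable_Pt hs).ofReal hg.ofReal ξ

lemma poissonConv_eq_fourier_neg (hs : 0 < s) (hg : Integrable g) (x : 𝔼) :
    (poissonConv s g x : ℂ) =
      𝓕 (fun ξ : 𝔼 => poissonSymbol (s * ‖ξ‖) * 𝓕 (fun x => (g x : ℂ)) ξ) (-x) := by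
  have hF := funext (fourier_poissonConv hs hg)
  have hint : Integrable (𝓕 fun x => (poissonConv s g x : ℂ)) := by
    rw [hF]
    refine (integrable_poissonSymbol_mul_norm hs).ofReal.mul_bdd (c := ∫ x, ‖(g x : ℂ)‖)
      (continuous_fourier hg.ofReal).aestronglyMeasurable (.of_forall fun ξ => ?_)
    exact VectorFourier.norm_fourierIntegral_le_integral_norm _ _ _ _ _
  have hcont := Complex.continuous_ofReal.comp (continuous_poissonConv hs hg)
  have hinv := hcont.fourierInv_fourier_eq (integrable_poissonConv hs hg).ofReal hint
  rw [← hF, ← Real.fourierInv_eq_fourier_neg]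
  exact (congrFun hinv x).symm

variable {Ω : Type*} [MeasurableSpace Ω] {ν : Measure Ω} {σ : Ω → ℝ}
  {G : Ω → EuclideanSpace ℝ (Fin N) → ℝ}

lemma aestronglyMeasurable_poissonConv_iff [SFinite ν] (hσ : Measurable σ)
    (hσpos : ∀ᵐ ω ∂ν, 0 < σ ω) (hG : ∀ᵐ ω ∂ν, Integrable (G ω)) :
    (∀ x, AEStronglyMeasurable (fun ω => poissonConv (σ ω) (G ω) x) ν) ↔
      ∀ ξ, AEStronglyMeasurable (fun ω => 𝓕 (fun x => (G ω x : ℂ)) ξ) ν := by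
  have hmeasSymbol := measurable_poissonSymbol
  constructor
  · intro hconv ξ
    have hjoint : AEStronglyMeasurable
        (Function.uncurry fun ω x => (poissonConv (σ ω) (G ω) x : ℂ)) (ν.prod volume) := by
      refine aestronglyMeasurable_uncurry_of_ae_continuous ?_ fun x =>
        Complex.continuous_ofReal.comp_aestronglyMeasurable (hconv x)
      filter_upwards [hσpos, hG] with ω hω hGω
      exact Complex.continuous_ofReal.comp (continuous_poissonConv hω hGω)
    have hsymbol : AEStronglyMeasurable (fun ω => ((poissonSymbol (σ ω * ‖ξ‖) : ℂ))⁻¹) ν :=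
      Measurable.aestronglyMeasurable (by fun_prop)
    refine (hsymbol.mul (aestronglyMeasurable_fourier hjoint ξ)).congr ?_
    filter_upwards [hσpos, hG] with ω hω hGω
    have hne : (poissonSymbol (σ ω * ‖ξ‖) : ℂ) ≠ 0 := mod_cast (poissonSymbol_pos _).ne'
    rw [Pi.mul_apply, fourier_poissonConv hω hGω, inv_mul_cancel_left₀ hne]
  · intro hfourier x
    have hjoint : AEStronglyMeasurable
        (Function.uncurry fun ω ξ => 𝓕 (fun x => (G ω x : ℂ)) ξ) (ν.prod volume) := by
      refine aestronglyMeasurable_uncurry_of_ae_continuous ?_ hfourier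
      filter_upwards [hG] with ω hGω using continuous_fourier hGω.ofReal
    have hsymbol : AEStronglyMeasurable
        (fun q : Ω × 𝔼 => (poissonSymbol (σ q.1 * ‖q.2‖) : ℂ)) (ν.prod volume) :=
      Measurable.aestronglyMeasurable (by fun_prop)
    refine (Complex.continuous_re.comp_aestronglyMeasurable
      (aestronglyMeasurable_fourier (f := fun ω ξ => poissonSymbol (σ ω * ‖ξ‖) *
        𝓕 (fun x => (G ω x : ℂ)) ξ) (hsymbol.mul hjoint) (-x))).congr ?_
    filter_upwards [hσpos, hG] with ω hω hGω
    rw [← poissonConv_eq_fourier_neg hω hGω x, Complex.ofReal_re]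

end PoissonConv

section TimeMeasurability

lemma norm_gradient_eq_norm_fderiv {E : Type*} [NormedAddCommGroup E] [InnerProductSpace ℝ E]
    [CompleteSpace E] (f : E → ℝ) (x : E) : ‖gradient f x‖ = ‖fderiv ℝ f x‖ := by
  rw [gradient, LinearIsometryEquiv.norm_map]

lemma aestronglyMeasurable_norm_gradient_poissonConv {N : ℕ} {g : EuclideanSpace ℝ (Fin N) → ℝ}
    (hg : Integrable g) : AEStronglyMeasurable
      (Function.uncurry fun s x => ‖gradient (poissonConv s g) x‖)
      ((volume.restrict (Set.Ioi 0)).prod volume) := by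
  have hcont : Continuous (Function.uncurry fun a x => poissonConv (exp a) g x) :=
    continuous_iff_continuousAt.2 fun q =>
      (continuousAt_uncurry_poissonConv (exp_pos q.1) hg q.2).comp
        (f := fun q : ℝ × EuclideanSpace ℝ (Fin N) => (exp q.1, q.2)) (by fun_prop)
  have hmeas := (measurable_fderiv_with_param ℝ hcont).norm.comp
    (measurable_log.prodMap measurable_id)
  refine hmeas.aestronglyMeasurable.congr ?_
  filter_upwards [Measure.quasiMeasurePreserving_fst.ae (ae_restrict_mem measurableSet_Ioi)]
    with q hq
  simp only [Function.comp_apply, Prod.map, Function.uncurry, norm_gradient_eq_norm_fderiv, id_eq,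
    exp_log (Set.mem_Ioi.1 hq)]

lemma aestronglyMeasurable_restrict_biUnion_of_isOpen {X E ι : Type*} [TopologicalSpace X]
    [SecondCountableTopology X] [MeasurableSpace X] {μ : Measure X} [TopologicalSpace E]
    [TopologicalSpace.PseudoMetrizableSpace E] {f : X → E} {S : Set ι} {u : ι → Set X}
    (hu : ∀ i ∈ S, IsOpen (u i)) (hf : ∀ i ∈ S, AEStronglyMeasurable f (μ.restrict (u i))) :
    AEStronglyMeasurable f (μ.restrict (⋃ i ∈ S, u i)) := by
  obtain ⟨T, hTS, hTcount, hTU⟩ := TopologicalSpace.isOpen_biUnion_countable S u hu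
  have := hTcount.to_subtype
  rw [← hTU, Set.biUnion_eq_iUnion, aestronglyMeasurable_iUnion_iff]
  exact fun i => hf i (hTS i.2)

lemma aestronglyMeasurable_restrict_Ioi_of_forall_or_eq {E : Type*} [TopologicalSpace E]
    [TopologicalSpace.PseudoMetrizableSpace E] {f f' : ℝ → E} {a : ℝ}
    (hf' : AEStronglyMeasurable f' (volume.restrict (Set.Ioi a)))
    (h : ∀ t > a, AEStronglyMeasurable f (volume.restrict (Set.Ioo a t)) ∨ f t = f' t) :
    AEStronglyMeasurable f (volume.restrict (Set.Ioi a)) := by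
  let S : Set ℝ := {t | a < t ∧ AEStronglyMeasurable f (volume.restrict (Set.Ioo a t))}
  let U : Set ℝ := ⋃ t ∈ S, Set.Ioo a t
  have hU : AEStronglyMeasurable f (volume.restrict U) :=
    aestronglyMeasurable_restrict_biUnion_of_isOpen (fun t _ => isOpen_Ioo) fun t ht => ht.2
  have hUmeas : MeasurableSet U := (isOpen_biUnion fun t _ => isOpen_Ioo).measurableSet
  have hsub : (S \ U).Subsingleton := by
    have hle : ∀ s ∈ S \ U, ∀ t ∈ S \ U, t ≤ s := fun s hs t ht =>
      le_of_not_gt fun hst => hs.2 (Set.mem_biUnion ht.1 ⟨hs.1.1, hst⟩)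
    exact fun s hs t ht => (hle t ht s hs).antisymm (hle s hs t ht)
  have hdiff : AEStronglyMeasurable f (volume.restrict (Set.Ioi a \ U)) := by
    refine (hf'.mono_set Set.sdiff_subset).congr ?_
    have hnotMem := ae_restrict_of_ae (s := Set.Ioi a \ U)
      (hsub.countable.ae_notMem (volume : Measure ℝ))
    filter_upwards [hnotMem, ae_restrict_mem (measurableSet_Ioi.diff hUmeas)] with t ht htU
    exact ((h t htU.1).resolve_left fun htS => ht ⟨⟨htU.1, htS⟩, htU.2⟩).symm
  refine AEStronglyMeasurable.mono_set (t := U ∪ (Set.Ioi a \ U)) ?_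
    (aestronglyMeasurable_union_iff.2 ⟨hU, hdiff⟩)
  rw [Set.union_sdiff_self]
  exact Set.subset_union_right

end TimeMeasurability

section Connectedness

variable {Ω X : Type*} [MeasurableSpace Ω] {μ : Measure Ω} [TopologicalSpace X] [SequentialSpace X]
  {F : Ω → X → ℝ} {w : X → ℝ} {bound : Ω → ℝ}

lemma isClosed_setOf_aestronglyMeasurable_and_eq_integral (hF : ∀ᵐ ω ∂μ, Continuous (F ω))
    (hbound : Integrable bound μ) (hFbound : ∀ x, ∀ᵐ ω ∂μ, ‖F ω x‖ ≤ bound ω) (hw : Continuous w) :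
    IsClosed {x | AEStronglyMeasurable (F · x) μ ∧ w x = ∫ ω, F ω x ∂μ} := by
  refine IsSeqClosed.isClosed fun u x hu hux => ?_
  have hlim : ∀ᵐ ω ∂μ, Tendsto (fun n => F ω (u n)) atTop (𝓝 (F ω x)) := by
    filter_upwards [hF] with ω hω using (hω.tendsto x).comp hux
  refine ⟨aestronglyMeasurable_of_tendsto_ae atTop (fun n => (hu n).1) hlim,
    tendsto_nhds_unique ((hw.tendsto x).comp hux) ?_⟩
  exact (tendsto_integral_of_dominated_convergence bound (fun n => (hu n).1) hbound
    (fun n => hFbound (u n)) hlim).congr fun n => (hu n).2.symm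

-- Where `F · x` is not measurable the integral is `0` by convention, so the closed sets
-- `{x | F · x measurable and w x = ∫ F · x}` and `{x | w x = 0}` cover `X`.
-- At a common point the nonnegative function `F · x` vanishes almost everywhere.
lemma forall_aestronglyMeasurable_or_eq_zero [PreconnectedSpace X]
    (hF : ∀ᵐ ω ∂μ, Continuous (F ω)) (hbound : Integrable bound μ)
    (hFbound : ∀ x, ∀ᵐ ω ∂μ, ‖F ω x‖ ≤ bound ω) (hF0 : ∀ x, 0 ≤ᵐ[μ] (F · x))
    (hzero : ∀ᵐ ω ∂μ, ∀ x, F ω x = 0 → ∀ x', F ω x' = 0)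
    (hw : Continuous w) (hdense : Dense {x | w x = ∫ ω, F ω x ∂μ}) :
    (∀ x, AEStronglyMeasurable (F · x) μ) ∨ w = 0 := by
  let A : Set X := {x | AEStronglyMeasurable (F · x) μ ∧ w x = ∫ ω, F ω x ∂μ}
  let Z : Set X := {x | w x = 0}
  have hA : IsClosed A :=
    isClosed_setOf_aestronglyMeasurable_and_eq_integral hF hbound hFbound hw
  have hZ : IsClosed Z := isClosed_eq hw continuous_const
  have hcover : A ∪ Z = Set.univ := by
    refine ((hdense.mono fun x hx => ?_).closure_eq ▸ (hA.union hZ).closure_eq).symm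
    by_cases hmeas : AEStronglyMeasurable (F · x) μ
    · exact .inl ⟨hmeas, hx⟩
    · exact .inr (hx.trans (integral_undef fun h => hmeas h.1))
  by_cases hAZ : (A ∩ Z).Nonempty
  · obtain ⟨x₀, hx₀A, hx₀Z⟩ := hAZ
    have hint : Integrable (F · x₀) μ := hbound.mono' hx₀A.1 (hFbound x₀)
    have hvanish := (integral_eq_zero_iff_of_nonneg_ae (hF0 x₀) hint).1 (hx₀A.2 ▸ hx₀Z)
    refine .inl fun x => aestronglyMeasurable_const (b := (0 : ℝ)).congr ?_
    filter_upwards [hzero, hvanish] with ω hω hω₀ using (hω x₀ hω₀ x).symm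
  · rcases isPreconnected_iff_subset_of_disjoint_closed.1 (isPreconnected_univ (α := X)) A Z hA hZ
      hcover.ge (by rwa [Set.univ_inter, ← Set.not_nonempty_iff_eq_empty]) with h | h
    · exact .inl fun x => (h (Set.mem_univ x)).1
    · exact .inr (funext fun x => h (Set.mem_univ x))

end Connectedness

section MassIdentity

variable {N : ℕ} {Ω : Type*} [MeasurableSpace Ω] {ν : Measure Ω} {σ : Ω → ℝ}
  {G : Ω → EuclideanSpace ℝ (Fin N) → ℝ}

lemma lintegral_enorm_poissonConv {s : ℝ} {g : EuclideanSpace ℝ (Fin N) → ℝ} (hs : 0 < s)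
    (hg : Integrable g) (hg0 : 0 ≤ᵐ[volume] g) :
    ∫⁻ x, ‖poissonConv s g x‖ₑ = ∫⁻ x, ENNReal.ofReal (g x) := by
  simp only [Real.enorm_of_nonneg (poissonConv_nonneg hs hg0 _)]
  rw [← ofReal_integral_eq_lintegral_ofReal (integrable_poissonConv hs hg)
    (.of_forall (poissonConv_nonneg hs hg0)), integral_poissonConv hs hg,
    ofReal_integral_eq_lintegral_ofReal hg hg0]

variable (hσpos : ∀ᵐ ω ∂ν, 0 < σ ω) (hG : ∀ᵐ ω ∂ν, Integrable (G ω))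
  (hG0 : ∀ᵐ ω ∂ν, 0 ≤ᵐ[volume] G ω)
  (hmeas : ∀ x, AEStronglyMeasurable (fun ω => poissonConv (σ ω) (G ω) x) ν)
include hσpos hG hG0 hmeas

lemma lintegral_prod_enorm_poissonConv :
    ∫⁻ q, ‖Function.uncurry (fun ω x => poissonConv (σ ω) (G ω) x) q‖ₑ ∂(ν.prod volume) =
      ∫⁻ ω, (∫⁻ x, ENNReal.ofReal (G ω x)) ∂ν := by
  have hcont : ∀ᵐ ω ∂ν, Continuous fun x => poissonConv (σ ω) (G ω) x := by
    filter_upwards [hσpos, hG] with ω hω hGω using continuous_poissonConv hω hGω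
  rw [lintegral_prod _ (aestronglyMeasurable_uncurry_of_ae_continuous hcont hmeas).enorm]
  refine lintegral_congr_ae ?_
  filter_upwards [hσpos, hG, hG0] with ω hω hGω hGω0
  exact lintegral_enorm_poissonConv hω hGω hGω0

lemma integrable_prod_poissonConv (hfin : ∫⁻ ω, (∫⁻ x, ENNReal.ofReal (G ω x)) ∂ν ≠ ⊤) :
    Integrable (Function.uncurry fun ω x => poissonConv (σ ω) (G ω) x) (ν.prod volume) := by
  refine ⟨aestronglyMeasurable_uncurry_of_ae_continuous ?_ hmeas, ?_⟩
  · filter_upwards [hσpos, hG] with ω hω hGω using continuous_poissonConv hω hGω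
  · exact (lintegral_prod_enorm_poissonConv hσpos hG hG0 hmeas).trans_lt hfin.lt_top

lemma integral_integral_poissonConv [SFinite ν]
    (hfin : ∫⁻ ω, (∫⁻ x, ENNReal.ofReal (G ω x)) ∂ν ≠ ⊤) :
    ∫ x, ∫ ω, poissonConv (σ ω) (G ω) x ∂ν =
      (∫⁻ ω, (∫⁻ x, ENNReal.ofReal (G ω x)) ∂ν).toReal := by
  have hint := integrable_prod_poissonConv hσpos hG hG0 hmeas hfin
  calc ∫ x, ∫ ω, poissonConv (σ ω) (G ω) x ∂ν
      = ∫ q, Function.uncurry (fun ω x => poissonConv (σ ω) (G ω) x) q ∂(ν.prod volume) :=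
        (integral_prod_symm _ hint).symm
    _ = ∫ q, ‖Function.uncurry (fun ω x => poissonConv (σ ω) (G ω) x) q‖ ∂(ν.prod volume) := by
        refine integral_congr_ae ?_
        filter_upwards [Measure.quasiMeasurePreserving_fst.ae hσpos,
          Measure.quasiMeasurePreserving_fst.ae hG0] with q hq hq0
        exact (norm_of_nonneg (poissonConv_nonneg hq hq0 _)).symm
    _ = (∫⁻ ω, (∫⁻ x, ENNReal.ofReal (G ω x)) ∂ν).toReal := by
        rw [integral_norm_eq_lintegral_enorm hint.1,
          lintegral_prod_enorm_poissonConv hσpos hG hG0 hmeas]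

end MassIdentity

section Decay

variable {I : ℝ → ℝ≥0∞} {K a : ℝ}

lemma setLIntegral_Ioi_le_of_le_rpow (hK : 0 ≤ K) (ha : 0 < a)
    (hI : ∀ τ, 0 < τ → I τ ≤ ENNReal.ofReal (K * (1 + τ) ^ (-(a + 1)))) {t : ℝ} (ht : 0 < t) :
    ∫⁻ τ in Set.Ioi t, I τ ≤ ENNReal.ofReal (K / a * t ^ (-a)) := by
  have hvalue : ∫ τ in Set.Ioi t, K * τ ^ (-(a + 1)) = K / a * t ^ (-a) := by
    rw [integral_const_mul, integral_Ioi_rpow_of_lt (by linarith) ht, neg_add, neg_add_cancel_right,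
      neg_div_neg_eq]
    ring
  have hint : IntegrableOn (fun τ : ℝ => K * τ ^ (-(a + 1))) (Set.Ioi t) :=
    (integrableOn_Ioi_rpow_of_lt (by linarith) ht).const_mul K
  have hnonneg : 0 ≤ᵐ[volume.restrict (Set.Ioi t)] fun τ => K * τ ^ (-(a + 1)) := by
    filter_upwards [ae_restrict_mem measurableSet_Ioi] with τ hτ
    exact mul_nonneg hK (rpow_nonneg (ht.trans hτ).le _)
  rw [← hvalue, ofReal_integral_eq_lintegral_ofReal hint hnonneg]
  refine setLIntegral_mono' measurableSet_Ioi fun τ hτ => ?_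
  have hτ0 : 0 < τ := ht.trans hτ
  refine (hI τ hτ0).trans (ENNReal.ofReal_le_ofReal (mul_le_mul_of_nonneg_left ?_ hK))
  exact rpow_le_rpow_of_nonpos hτ0 (by linarith) (by linarith)

lemma setLIntegral_Ioi_zero_ne_top_of_le_rpow (hK : 0 ≤ K) (ha : 0 < a)
    (hI : ∀ τ, 0 < τ → I τ ≤ ENNReal.ofReal (K * (1 + τ) ^ (-(a + 1)))) :
    ∫⁻ τ in Set.Ioi 0, I τ ≠ ⊤ := by
  rw [← Set.Ioc_union_Ioi_eq_Ioi zero_le_one, lintegral_union measurableSet_Ioi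
    (Set.Ioc_disjoint_Ioi le_rfl)]
  refine ENNReal.add_ne_top.2 ⟨ne_top_of_le_ne_top (b := ENNReal.ofReal K) ofReal_ne_top ?_,
    ne_top_of_le_ne_top ofReal_ne_top (setLIntegral_Ioi_le_of_le_rpow hK ha hI one_pos)⟩
  calc ∫⁻ τ in Set.Ioc 0 1, I τ ≤ ∫⁻ _ in Set.Ioc (0 : ℝ) 1, ENNReal.ofReal K := by
        refine setLIntegral_mono' measurableSet_Ioc fun τ hτ => ?_
        refine (hI τ hτ.1).trans (ENNReal.ofReal_le_ofReal (mul_le_of_le_one_right hK ?_))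
        exact rpow_le_one_of_one_le_of_nonpos (by linarith [hτ.1]) (by linarith)
    _ = ENNReal.ofReal K := by simp

lemma abs_toReal_setLIntegral_Ioo_sub_Ioi_le (hK : 0 ≤ K) (ha : 0 < a)
    (hI : ∀ τ, 0 < τ → I τ ≤ ENNReal.ofReal (K * (1 + τ) ^ (-(a + 1)))) {t : ℝ} (ht : 0 < t) :
    |(∫⁻ τ in Set.Ioo 0 t, I τ).toReal - (∫⁻ τ in Set.Ioi 0, I τ).toReal| ≤
      K / a * t ^ (-a) := by
  have hsplit : ∫⁻ τ in Set.Ioi 0, I τ =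
      (∫⁻ τ in Set.Ioo 0 t, I τ) + ∫⁻ τ in Set.Ioi t, I τ := by
    rw [← Set.Ioc_union_Ioi_eq_Ioi ht.le, lintegral_union measurableSet_Ioi
      (Set.Ioc_disjoint_Ioi le_rfl), restrict_Ioo_eq_restrict_Ioc]
  have hfin := setLIntegral_Ioi_zero_ne_top_of_le_rpow hK ha hI
  rw [hsplit] at hfin ⊢
  obtain ⟨hfinIoo, hfinIoi⟩ := ENNReal.add_ne_top.1 hfin
  rw [ENNReal.toReal_add hfinIoo hfinIoi, sub_add_cancel_left, abs_neg,
    abs_of_nonneg ENNReal.toReal_nonneg]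
  exact ENNReal.toReal_le_of_le_ofReal (by positivity)
    (setLIntegral_Ioi_le_of_le_rpow hK ha hI ht)

end Decay

section WeightedNorm

variable {α E : Type*} [MeasurableSpace α] {μ : Measure α} [NormedAddCommGroup E] {f : α → E}
  {r : ℝ} {M : ℝ≥0∞}

lemma lintegral_norm_rpow_le_of_mul_eLpNorm_le {p : ℝ} (hp : 0 < p) (hr : 0 < r) (hM : M ≠ ⊤)
    (h : ENNReal.ofReal r * eLpNorm f (ENNReal.ofReal p) μ ≤ M) :
    ∫⁻ x, ENNReal.ofReal (‖f x‖ ^ p) ∂μ ≤ ENNReal.ofReal (M.toReal ^ p * r ^ (-p)) := by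
  have hnorm : eLpNorm f (ENNReal.ofReal p) μ ≤ ENNReal.ofReal (M.toReal / r) := by
    rw [ENNReal.ofReal_div_of_pos hr, ENNReal.ofReal_toReal hM,
      ENNReal.le_div_iff_mul_le (.inl (by simpa using hr)) (.inl ofReal_ne_top), mul_comm]
    exact h
  calc ∫⁻ x, ENNReal.ofReal (‖f x‖ ^ p) ∂μ = eLpNorm f (ENNReal.ofReal p) μ ^ p := by
        rw [eLpNorm_eq_lintegral_rpow_enorm_toReal (by simpa using hp) ofReal_ne_top,
          ENNReal.toReal_ofReal hp.le, ← ENNReal.rpow_mul, one_div_mul_cancel hp.ne',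
          ENNReal.rpow_one]
        simp only [← ENNReal.ofReal_rpow_of_nonneg (norm_nonneg _) hp.le, ofReal_norm]
    _ ≤ ENNReal.ofReal (M.toReal / r) ^ p := by gcongr
    _ = ENNReal.ofReal (M.toReal ^ p * r ^ (-p)) := by
        rw [ENNReal.ofReal_rpow_of_nonneg (by positivity) hp.le,
          div_rpow ENNReal.toReal_nonneg hr.le, rpow_neg hr.le, div_eq_mul_inv]

lemma ae_norm_le_of_mul_eLpNorm_top_le (hr : 1 ≤ r) (hM : M ≠ ⊤)
    (h : ENNReal.ofReal r * eLpNorm f ⊤ μ ≤ M) : ∀ᵐ x ∂μ, ‖f x‖ ≤ M.toReal := by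
  rw [eLpNorm_exponent_top] at h
  have hsup : eLpNormEssSup f μ ≤ M :=
    (le_mul_of_one_le_left zero_le (by simpa using hr)).trans h
  filter_upwards [ae_le_eLpNormEssSup (μ := μ) (f := f)] with x hx
  rw [← toReal_enorm (f x)]
  exact ENNReal.toReal_mono hM (hx.trans hsup)

end WeightedNorm

section MildSolution

variable {N : ℕ}

local notation "𝔼" => EuclideanSpace ℝ (Fin N)

/-- The Duhamel term `∫_0^t P_{t-τ} * g_τ dτ` produced by the source `g`. -/
noncomputable def poissonDuhamel (g : ℝ → 𝔼 → ℝ) (t : ℝ) (x : 𝔼) : ℝ :=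
  ∫ τ in (0 : ℝ)..t, poissonConv (t - τ) (g τ) x

/-- The source `‖∇v(·, τ)‖^p` of the equation, as a function of time and then space. -/
noncomputable def gradPow (p : ℝ) (v : 𝔼 → ℝ → ℝ) (τ : ℝ) (x : 𝔼) : ℝ :=
  ‖gradient (fun z => v z τ) x‖ ^ p

variable {g : ℝ → EuclideanSpace ℝ (Fin N) → ℝ} {u₀ : EuclideanSpace ℝ (Fin N) → ℝ} {t : ℝ}

lemma poissonDuhamel_eq_setIntegral_Ioo (ht : 0 < t) (x : 𝔼) :
    poissonDuhamel g t x = ∫ τ in Set.Ioo 0 t, poissonConv (t - τ) (g τ) x := by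
  rw [poissonDuhamel, intervalIntegral.integral_of_le ht.le, restrict_Ioo_eq_restrict_Ioc]

lemma ae_restrict_Ioo_of_forall_pos {q : ℝ → Prop} (h : ∀ τ, 0 < τ → q τ) :
    ∀ᵐ τ ∂volume.restrict (Set.Ioo 0 t), q τ := by
  filter_upwards [ae_restrict_mem measurableSet_Ioo] with τ hτ using h τ hτ.1

lemma ae_restrict_Ioo_sub_pos : ∀ᵐ τ ∂volume.restrict (Set.Ioo 0 t), 0 < t - τ := by
  filter_upwards [ae_restrict_mem measurableSet_Ioo] with τ hτ using sub_pos.2 hτ.2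

lemma aestronglyMeasurable_poissonConv_or_eq {M : ℝ} {w : 𝔼 → ℝ}
    (hg : ∀ τ, 0 < τ → Integrable (g τ)) (hg0 : ∀ τ, 0 < τ → 0 ≤ᵐ[volume] g τ)
    (hgM : ∀ τ, 0 < τ → ∀ᵐ x, g τ x ≤ M) (hu₀ : Integrable u₀) (ht : 0 < t) (hw : Continuous w)
    (hmild : ∀ᵐ x, w x = poissonConv t u₀ x + poissonDuhamel g t x) :
    (∀ x, AEStronglyMeasurable (fun τ => poissonConv (t - τ) (g τ) x)
      (volume.restrict (Set.Ioo 0 t))) ∨ w = poissonConv t u₀ := by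
  have hg' := ae_restrict_Ioo_of_forall_pos (t := t) hg
  have hg0' := ae_restrict_Ioo_of_forall_pos (t := t) hg0
  have hcont : ∀ᵐ τ ∂volume.restrict (Set.Ioo 0 t), Continuous (poissonConv (t - τ) (g τ)) := by
    filter_upwards [ae_restrict_Ioo_sub_pos, hg'] with τ hτ hgτ using continuous_poissonConv hτ hgτ
  have hnonneg : ∀ x, 0 ≤ᵐ[volume.restrict (Set.Ioo 0 t)] fun τ => poissonConv (t - τ) (g τ) x := by
    intro x
    filter_upwards [ae_restrict_Ioo_sub_pos, hg0'] with τ hτ hgτ0 using poissonConv_nonneg hτ hgτ0 x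
  have hbound : ∀ x, ∀ᵐ τ ∂volume.restrict (Set.Ioo 0 t), ‖poissonConv (t - τ) (g τ) x‖ ≤ M := by
    intro x
    filter_upwards [ae_restrict_Ioo_sub_pos, hg', ae_restrict_Ioo_of_forall_pos hgM, hnonneg x]
      with τ hτ hgτ hgτM h0
    exact (norm_of_nonneg h0).trans_le (poissonConv_le hτ hgτ hgτM x)
  have hzero : ∀ᵐ τ ∂volume.restrict (Set.Ioo 0 t), ∀ x, poissonConv (t - τ) (g τ) x = 0 →
      ∀ x', poissonConv (t - τ) (g τ) x' = 0 := by
    filter_upwards [ae_restrict_Ioo_sub_pos, hg', hg0'] with τ hτ hgτ hgτ0 x hx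
    exact poissonConv_eq_zero_of_eq_zero hτ hgτ hgτ0 hx
  refine (forall_aestronglyMeasurable_or_eq_zero hcont (integrable_const M) hbound hnonneg hzero
    (hw.sub (continuous_poissonConv ht hu₀)) ?_).imp_right sub_eq_zero.1
  refine (Measure.dense_of_ae hmild).mono fun x hx => ?_
  simp only [Set.mem_ofPred_eq, Pi.sub_apply] at hx ⊢
  rw [hx, poissonDuhamel_eq_setIntegral_Ioo ht, add_sub_cancel_left]

lemma integrable_poissonDuhamel_and_integral_eq (hg : ∀ τ, 0 < τ → Integrable (g τ))
    (hg0 : ∀ τ, 0 < τ → 0 ≤ᵐ[volume] g τ) (ht : 0 < t)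
    (hmeas : ∀ x, AEStronglyMeasurable (fun τ => poissonConv (t - τ) (g τ) x)
      (volume.restrict (Set.Ioo 0 t)))
    (hfin : ∫⁻ τ in Set.Ioo 0 t, ∫⁻ x, ENNReal.ofReal (g τ x) ≠ ⊤) :
    Integrable (poissonDuhamel g t) ∧ ∫ x, poissonDuhamel g t x =
      (∫⁻ τ in Set.Ioo 0 t, ∫⁻ x, ENNReal.ofReal (g τ x)).toReal := by
  have hg' := ae_restrict_Ioo_of_forall_pos (t := t) hg
  have hg0' := ae_restrict_Ioo_of_forall_pos (t := t) hg0
  rw [funext (poissonDuhamel_eq_setIntegral_Ioo (g := g) ht)]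
  exact ⟨(integrable_prod_poissonConv ae_restrict_Ioo_sub_pos hg' hg0' hmeas
    hfin).integral_prod_right, integral_integral_poissonConv ae_restrict_Ioo_sub_pos hg' hg0'
    hmeas hfin⟩

variable {p : ℝ} {v : EuclideanSpace ℝ (Fin N) → ℝ → ℝ}

lemma gradPow_nonneg (τ : ℝ) (x : 𝔼) : 0 ≤ gradPow p v τ x := rpow_nonneg (norm_nonneg _) p

lemma measurable_gradPow (τ : ℝ) : Measurable (gradPow p v τ) := by
  unfold gradPow
  simp only [norm_gradient_eq_norm_fderiv]
  exact (measurable_fderiv ℝ _).norm.pow_const p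

lemma integrable_gradPow {τ : ℝ} (h : ∫⁻ x, ENNReal.ofReal (gradPow p v τ x) ≠ ⊤) :
    Integrable (gradPow p v τ) :=
  ⟨(measurable_gradPow τ).aestronglyMeasurable,
    (hasFiniteIntegral_iff_ofReal (.of_forall (gradPow_nonneg τ))).2 h.lt_top⟩

lemma aestronglyMeasurable_poissonConv_gradPow {M : ℝ}
    (hv : ∀ t, 0 < t → Continuous fun x => v x t)
    (hg : ∀ τ, 0 < τ → Integrable (gradPow p v τ))
    (hgM : ∀ τ, 0 < τ → ∀ᵐ x, gradPow p v τ x ≤ M) (hu₀ : Integrable u₀)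
    (hmild : ∀ t, 0 < t → ∀ᵐ x,
      v x t = poissonConv t u₀ x + poissonDuhamel (gradPow p v) t x) (t : ℝ) (x : 𝔼) :
    AEStronglyMeasurable (fun τ => poissonConv (t - τ) (gradPow p v τ) x)
      (volume.restrict (Set.Ioo 0 t)) := by
  have hiff (s : ℝ) := aestronglyMeasurable_poissonConv_iff (σ := fun τ => s - τ)
    (measurable_const.sub measurable_id) ae_restrict_Ioo_sub_pos (ae_restrict_Ioo_of_forall_pos hg)
  refine (hiff t).2 (fun ξ => ?_) x
  have hfree : AEStronglyMeasurable
      (fun τ => 𝓕 (fun x => ((‖gradient (poissonConv τ u₀) x‖ ^ p : ℝ) : ℂ)) ξ)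
      (volume.restrict (Set.Ioi 0)) :=
    aestronglyMeasurable_fourier (Complex.continuous_ofReal.comp_aestronglyMeasurable
      ((aestronglyMeasurable_norm_gradient_poissonConv hu₀).aemeasurable.pow_const
        p).aestronglyMeasurable) ξ
  refine (aestronglyMeasurable_restrict_Ioi_of_forall_or_eq hfree fun s hs => ?_).mono_set
    Set.Ioo_subset_Ioi_self
  refine (aestronglyMeasurable_poissonConv_or_eq hg (fun τ _ => .of_forall (gradPow_nonneg τ)) hgM
    hu₀ hs (hv s hs) (hmild s hs)).imp (fun h => (hiff s).1 h ξ) fun h => ?_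
  simp only [gradPow, h]

lemma integral_eq_of_mild {M : ℝ} (hv : ∀ t, 0 < t → Continuous fun x => v x t)
    (hg : ∀ τ, 0 < τ → Integrable (gradPow p v τ))
    (hgM : ∀ τ, 0 < τ → ∀ᵐ x, gradPow p v τ x ≤ M) (hu₀ : Integrable u₀)
    (hmild : ∀ t, 0 < t → ∀ᵐ x,
      v x t = poissonConv t u₀ x + poissonDuhamel (gradPow p v) t x) (ht : 0 < t)
    (hfin : ∫⁻ τ in Set.Ioo 0 t, ∫⁻ x, ENNReal.ofReal (gradPow p v τ x) ≠ ⊤) :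
    ∫ x, v x t = (∫ x, u₀ x) +
      (∫⁻ τ in Set.Ioo 0 t, ∫⁻ x, ENNReal.ofReal (gradPow p v τ x)).toReal := by
  obtain ⟨hint, hmass⟩ := integrable_poissonDuhamel_and_integral_eq hg
    (fun τ _ => .of_forall (gradPow_nonneg τ)) ht
    (aestronglyMeasurable_poissonConv_gradPow hv hg hgM hu₀ hmild t) hfin
  rw [integral_congr_ae (hmild t ht), integral_add (integrable_poissonConv ht hu₀) hint, hmass,
    integral_poissonConv ht hu₀]

lemma exists_lintegral_gradPow_le (hp : 0 < p)
    (hdecay : ∃ M : ℝ≥0∞, M ≠ ⊤ ∧ ∀ t : ℝ, 0 < t →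
      ENNReal.ofReal ((1 + t) ^ ((N : ℝ) * (1 - (1 / ENNReal.ofReal p).toReal) + 1))
        * eLpNorm (fun x => ‖gradient (fun z => v z t) x‖) (ENNReal.ofReal p) volume ≤ M) :
    ∃ K : ℝ, 0 ≤ K ∧ ∀ τ : ℝ, 0 < τ → ∫⁻ x, ENNReal.ofReal (gradPow p v τ x) ≤
      ENNReal.ofReal (K * (1 + τ) ^ (-(((N : ℝ) + 1) * (p - 1) + 1))) := by
  obtain ⟨M, hM, hdecay⟩ := hdecay
  refine ⟨M.toReal ^ p, by positivity, fun τ hτ => ?_⟩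
  have hexp : ((N : ℝ) * (1 - (1 / ENNReal.ofReal p).toReal) + 1) * -p =
      -(((N : ℝ) + 1) * (p - 1) + 1) := by
    rw [ENNReal.toReal_div, ENNReal.toReal_ofReal hp.le, ENNReal.toReal_one]
    field_simp
    ring
  have hle := lintegral_norm_rpow_le_of_mul_eLpNorm_le hp (by positivity) hM
    (eLpNorm_norm (gradient fun z => v z τ) ▸ hdecay τ hτ)
  rwa [← rpow_mul (by positivity), hexp] at hle

lemma exists_ae_gradPow_le (hp : 0 ≤ p)
    (hdecay : ∃ M : ℝ≥0∞, M ≠ ⊤ ∧ ∀ t : ℝ, 0 < t →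
      ENNReal.ofReal ((1 + t) ^ ((N : ℝ) * (1 - (1 / (⊤ : ℝ≥0∞)).toReal) + 1))
        * eLpNorm (fun x => ‖gradient (fun z => v z t) x‖) ⊤ volume ≤ M) :
    ∃ M : ℝ, ∀ τ : ℝ, 0 < τ → ∀ᵐ x, gradPow p v τ x ≤ M := by
  obtain ⟨M, hM, hdecay⟩ := hdecay
  refine ⟨M.toReal ^ p, fun τ hτ => ?_⟩
  have hweight : 1 ≤ (1 + τ) ^ ((N : ℝ) * (1 - (1 / (⊤ : ℝ≥0∞)).toReal) + 1) :=
    one_le_rpow (by linarith) (by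
      simp only [one_div, inv_top, toReal_zero, sub_zero, mul_one]
      positivity)
  filter_upwards [ae_norm_le_of_mul_eLpNorm_top_le hweight hM
    (eLpNorm_norm (gradient fun z => v z τ) ▸ hdecay τ hτ)] with x hx
  exact rpow_le_rpow (norm_nonneg _) hx hp

end MildSolution

theorem stmt_17_general (N : ℕ) (p : ℝ) (hp : 1 < p)
    (u0 : EuclideanSpace ℝ (Fin N) → ℝ) (hu0 : Integrable u0 volume)
    (v : EuclideanSpace ℝ (Fin N) → ℝ → ℝ)
    (hdiff : ∀ t : ℝ, 0 < t → Differentiable ℝ (fun x => v x t))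
    (hmild : ∀ t : ℝ, 0 < t → ∀ᵐ x ∂(volume : Measure (EuclideanSpace ℝ (Fin N))),
        v x t = (∫ y, Pt N t (x - y) * u0 y)
          + ∫ τ in (0:ℝ)..t, ∫ y, Pt N (t - τ) (x - y)
              * ‖gradient (fun z => v z τ) y‖ ^ p)
    (hdecay : ∀ q ∈ ({ENNReal.ofReal p, ⊤} : Set ℝ≥0∞),
        ∃ M : ℝ≥0∞, M ≠ ⊤ ∧ ∀ t : ℝ, 0 < t →
          ENNReal.ofReal ((1 + t) ^ ((N : ℝ) * (1 - (1 / q).toReal) + 1))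
            * eLpNorm (fun x => ‖gradient (fun z => v z t) x‖) q volume ≤ M) :
    (∫⁻ τ in Set.Ioi (0:ℝ), ∫⁻ x : EuclideanSpace ℝ (Fin N),
        ENNReal.ofReal (‖gradient (fun z => v z τ) x‖ ^ p)) ≠ ⊤ ∧
    ∃ C : ℝ, 0 < C ∧ ∀ t : ℝ, 1 ≤ t →
      |(∫ x, v x t) - ((∫ x, u0 x)
          + (∫⁻ τ in Set.Ioi (0:ℝ), ∫⁻ x : EuclideanSpace ℝ (Fin N),
              ENNReal.ofReal (‖gradient (fun z => v z τ) x‖ ^ p)).toReal)|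
        ≤ C * t ^ (-(((N : ℝ) + 1) * (p - 1))) := by
  have hp0 : 0 < p := one_pos.trans hp
  have ha : 0 < ((N : ℝ) + 1) * (p - 1) := mul_pos (by positivity) (sub_pos.2 hp)
  obtain ⟨K, hK, hmass⟩ := exists_lintegral_gradPow_le hp0 (hdecay _ (.inl rfl))
  obtain ⟨M, hM⟩ := exists_ae_gradPow_le hp0.le (hdecay _ (.inr rfl))
  have htotal := setLIntegral_Ioi_zero_ne_top_of_le_rpow hK ha hmass
  refine ⟨htotal, K / (((N : ℝ) + 1) * (p - 1)) + 1, by positivity, fun t ht => ?_⟩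
  have ht0 : 0 < t := one_pos.trans_le ht
  have hfinite : ∫⁻ τ in Set.Ioo 0 t, ∫⁻ x, ENNReal.ofReal (gradPow p v τ x) ≠ ⊤ :=
    ne_top_of_le_ne_top htotal (lintegral_mono_set Set.Ioo_subset_Ioi_self)
  have hint : ∀ τ, 0 < τ → Integrable (gradPow p v τ) := fun τ hτ =>
    integrable_gradPow (ne_top_of_le_ne_top ofReal_ne_top (hmass τ hτ))
  rw [integral_eq_of_mild (fun s hs => (hdiff s hs).continuous) hint hM hu0 hmild ht0 hfinite,
    add_sub_add_left_eq_sub]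
  refine (abs_toReal_setLIntegral_Ioo_sub_Ioi_le hK ha hmass ht0).trans ?_
  gcongr
  exact le_add_of_nonneg_right zero_le_one

theorem stmt_17 (N : ℕ) (hN : 1 ≤ N) (p : ℝ) (hp : 1 < p)
    (u0 : EuclideanSpace ℝ (Fin N) → ℝ) (hu0 : Integrable u0 volume)
    (v : EuclideanSpace ℝ (Fin N) → ℝ → ℝ)
    (hdiff : ∀ t : ℝ, 0 < t → Differentiable ℝ (fun x => v x t))
    (hmild : ∀ t : ℝ, 0 < t → ∀ᵐ x ∂(volume : Measure (EuclideanSpace ℝ (Fin N))),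
        v x t = (∫ y, Pt N t (x - y) * u0 y)
          + ∫ τ in (0:ℝ)..t, ∫ y, Pt N (t - τ) (x - y)
              * ‖gradient (fun z => v z τ) y‖ ^ p)
    (hdecay0 : ∀ q : ℝ≥0∞, 1 ≤ q →
        ∃ M : ℝ≥0∞, M ≠ ⊤ ∧ ∀ t : ℝ, 0 < t →
          ENNReal.ofReal ((1 + t) ^ ((N : ℝ) * (1 - (1 / q).toReal)))
            * eLpNorm (fun x => v x t) q volume ≤ M)
    (hdecay1 : ∀ q : ℝ≥0∞, 1 ≤ q →
        ∃ M : ℝ≥0∞, M ≠ ⊤ ∧ ∀ t : ℝ, 0 < t →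
          ENNReal.ofReal ((1 + t) ^ ((N : ℝ) * (1 - (1 / q).toReal) + 1))
            * eLpNorm (fun x => ‖gradient (fun z => v z t) x‖) q volume ≤ M) :
    (∫⁻ τ in Set.Ioi (0:ℝ), ∫⁻ x : EuclideanSpace ℝ (Fin N),
        ENNReal.ofReal (‖gradient (fun z => v z τ) x‖ ^ p)) ≠ ⊤ ∧
    ∃ C : ℝ, 0 < C ∧ ∀ t : ℝ, 1 ≤ t →
      |(∫ x, v x t) - ((∫ x, u0 x)
          + (∫⁻ τ in Set.Ioi (0:ℝ), ∫⁻ x : EuclideanSpace ℝ (Fin N),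
              ENNReal.ofReal (‖gradient (fun z => v z τ) x‖ ^ p)).toReal)|
        ≤ C * t ^ (-(((N : ℝ) + 1) * (p - 1))) :=
  stmt_17_general N p hp u0 hu0 v hdiff hmild fun q hq =>
    hdecay1 q (by rcases hq with rfl | rfl <;> simp [hp.le])
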